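/- arXiv:2306.01799 — 3 statements merged into one kernel-verified Lean document; each statement's English description precedes it below -/
import Mathlib

section
/- Let n ≥ 1 and b, p, q : Fin n → ℝ with b i > 0, p i ∈ [0,1], q i ∈ [0,1], and assume the predicted eCPMs are pairwise distinct: b i * q i ≠ b j * q j whenever i ≠ j. Let j* be the (unique) index maximizing b j * q j. Then the welfare achieved by q is lower bounded by the conditional risk: b j* * p j* ≥ −(1/2) · R(q) + max_{i} (b i * p i) − (1/4) · ∑_{i ∈ Fin n} ∑_{j ∈ Fin n} |b i * p i − b j * p j|. -/
/-!
Symmetrize the risk over the two orders of each pair: `pairRisk i j + pairRisk j i + |v i - v j|` is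
`0` if the score `s` orders `i` and `j` as their values `v` do, `|v i - v j|` if it ties them, and
`2 * |v i - v j|` if it reverses them. These terms are nonnegative and their double sum is
`2 * R + ∑ i, ∑ j, |v i - v j|`. If `k` is more valuable than the top-scored `j`, the score reverses
`k` and `j`, and the entries `(k, j)` and `(j, k)` alone contribute `4 * (v k - v j)`.
-/

lemma add_swap_le_sum_sum {ι M : Type*} [Fintype ι] [AddCommMonoid M] [PartialOrder M]
    [IsOrderedAddMonoid M] {f : ι → ι → M} (hf : ∀ i j, 0 ≤ f i j) {k l : ι} (hkl : k ≠ l) :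
    f k l + f l k ≤ ∑ i, ∑ j, f i j :=
  have entry_le_row (i j : ι) : f i j ≤ ∑ j, f i j :=
    Finset.single_le_sum (fun j _ => hf i j) (Finset.mem_univ j)
  calc
    f k l + f l k ≤ ∑ j, f k j + ∑ j, f l j := add_le_add (entry_le_row k l) (entry_le_row l k)
    _ ≤ ∑ i, ∑ j, f i j :=
      Finset.add_le_sum (fun i _ => Finset.sum_nonneg fun j _ => hf i j)
        (Finset.mem_univ k) (Finset.mem_univ l) hkl

section Risk

variable {ι α K : Type*} [LinearOrder α] [CommRing K]

/-- The contribution of the ordered pair `(i, j)` to the conditional risk of ranking by the score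
`s` when the values are `v`. In the auction `v i = b i * p i` and `s i = b i * q i` are the
ground-truth and the predicted eCPM. -/
def pairRisk (v : ι → K) (s : ι → α) (i j : ι) : K :=
  (v i - v j) * (if s i ≤ s j then 1 else 0)

/-- The conditional risk `R` of ranking by the score `s` when the values are `v`, as a sum over
ordered pairs of distinct indices. -/
def conditionalRisk [Fintype ι] [DecidableEq ι] (v : ι → K) (s : ι → α) : K :=
  ∑ i, ∑ j, if i ≠ j then pairRisk v s i j else 0

lemma pairRisk_self (v : ι → K) (s : ι → α) (i : ι) : pairRisk v s i i = 0 := by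
  simp [pairRisk]

lemma conditionalRisk_eq_sum_sum_pairRisk [Fintype ι] [DecidableEq ι] (v : ι → K) (s : ι → α) :
    conditionalRisk v s = ∑ i, ∑ j, pairRisk v s i j := by
  refine Finset.sum_congr rfl fun i _ => Finset.sum_congr rfl fun j _ => ?_
  rcases eq_or_ne i j with rfl | hij
  · simp [pairRisk_self]
  · exact if_pos hij

lemma pairRisk_add_swap_of_lt (v : ι → K) {s : ι → α} {i j : ι} (hij : s i < s j) :
    pairRisk v s i j + pairRisk v s j i = v i - v j := by
  simp [pairRisk, hij.le, hij.not_ge]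

lemma pairRisk_add_swap_of_eq (v : ι → K) {s : ι → α} {i j : ι} (hij : s i = s j) :
    pairRisk v s i j + pairRisk v s j i = 0 := by
  simp [pairRisk, hij]

variable [LinearOrder K]

/-- The risk of the unordered pair `{i, j}`, shifted by `|v i - v j|` so that it vanishes exactly
when `v i = v j` or `s` orders `i` and `j` as `v` does. -/
def misorderingLoss (v : ι → K) (s : ι → α) (i j : ι) : K :=
  pairRisk v s i j + pairRisk v s j i + |v i - v j|

lemma sum_sum_misorderingLoss [Fintype ι] [DecidableEq ι] (v : ι → K) (s : ι → α) :
    ∑ i, ∑ j, misorderingLoss v s i j =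
      2 * conditionalRisk v s + ∑ i, ∑ j, |v i - v j| := by
  simp only [misorderingLoss, Finset.sum_add_distrib]
  rw [Finset.sum_comm (f := fun i j => pairRisk v s j i), conditionalRisk_eq_sum_sum_pairRisk,
    two_mul]

lemma misorderingLoss_comm (v : ι → K) (s : ι → α) (i j : ι) :
    misorderingLoss v s i j = misorderingLoss v s j i := by
  rw [misorderingLoss, misorderingLoss, abs_sub_comm, add_comm (pairRisk v s i j)]

lemma misorderingLoss_of_lt (v : ι → K) {s : ι → α} {i j : ι} (hij : s i < s j) :
    misorderingLoss v s i j = v i - v j + |v i - v j| := by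
  rw [misorderingLoss, pairRisk_add_swap_of_lt v hij]

variable [IsStrictOrderedRing K]

lemma misorderingLoss_nonneg (v : ι → K) (s : ι → α) (i j : ι) :
    0 ≤ misorderingLoss v s i j := by
  have nonneg_of_lt {i j : ι} (hij : s i < s j) : 0 ≤ misorderingLoss v s i j := by
    linarith [misorderingLoss_of_lt v hij, neg_abs_le (v i - v j)]
  rcases lt_trichotomy (s i) (s j) with hlt | heq | hgt
  · exact nonneg_of_lt hlt
  · rw [misorderingLoss, pairRisk_add_swap_of_eq v heq, zero_add]
    exact abs_nonneg _
  · exact misorderingLoss_comm v s i j ▸ nonneg_of_lt hgt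

lemma two_mul_sub_le_misorderingLoss (v : ι → K) {s : ι → α} {i j : ι} (hij : s i < s j) :
    2 * (v i - v j) ≤ misorderingLoss v s i j := by
  linarith [misorderingLoss_of_lt v hij, le_abs_self (v i - v j)]

lemma four_mul_sub_le_sum_sum_misorderingLoss [Fintype ι] (v : ι → K) {s : ι → α} {j : ι}
    (hj : ∀ i ≠ j, s i < s j) (k : ι) :
    4 * (v k - v j) ≤ ∑ i, ∑ l, misorderingLoss v s i l := by
  rcases eq_or_ne k j with rfl | hkj
  · rw [sub_self, mul_zero]
    exact Finset.sum_nonneg fun i _ => Finset.sum_nonneg fun l _ => misorderingLoss_nonneg v s i l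
  · calc
      4 * (v k - v j) = 2 * (v k - v j) + 2 * (v k - v j) := by ring
      _ ≤ misorderingLoss v s k j + misorderingLoss v s j k := by
        rw [misorderingLoss_comm v s j k]
        gcongr <;> exact two_mul_sub_le_misorderingLoss v (hj k hkj)
      _ ≤ ∑ i, ∑ l, misorderingLoss v s i l :=
        add_swap_le_sum_sum (misorderingLoss_nonneg v s) hkj

end Risk

theorem welfare_lower_bounded_by_risk_general {ι α K : Type*} [Fintype ι] [DecidableEq ι]
    [LinearOrder α] [Field K] [LinearOrder K] [IsStrictOrderedRing K]
    (v : ι → K) (s : ι → α) (j : ι) (hj : ∀ i ≠ j, s i < s j) :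
    -(1 / 2) * conditionalRisk v s + Finset.univ.sup' ⟨j, Finset.mem_univ j⟩ v -
      (1 / 4) * ∑ i, ∑ l, |v i - v l| ≤ v j := by
  obtain ⟨k, -, hk⟩ := Finset.exists_mem_eq_sup' ⟨j, Finset.mem_univ j⟩ v
  have hgap := four_mul_sub_le_sum_sum_misorderingLoss v hj k
  rw [sum_sum_misorderingLoss] at hgap
  rw [hk]
  linarith

/-- The welfare achieved by the prediction `q` in a single-slot auction is lower
bounded in terms of the conditional risk. -/
theorem welfare_lower_bounded_by_risk
    (n : ℕ) (hn : 1 ≤ n) (b p q : Fin n → ℝ)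
    (hb : ∀ i, 0 < b i)
    (hp : ∀ i, p i ∈ Set.Icc (0 : ℝ) 1)
    (hq : ∀ i, q i ∈ Set.Icc (0 : ℝ) 1)
    (hdistinct : ∀ i j : Fin n, i ≠ j → b i * q i ≠ b j * q j)
    (jstar : Fin n) (hjstar : ∀ i, b i * q i ≤ b jstar * q jstar) :
    -(1 / 2) * (∑ i : Fin n, ∑ j : Fin n,
        (if i ≠ j then
          (b i * p i - b j * p j) * (if b i * q i ≤ b j * q j then (1 : ℝ) else 0)
        else 0)) +
      Finset.univ.sup' ⟨⟨0, hn⟩, Finset.mem_univ _⟩ (fun i => b i * p i) -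
      (1 / 4) * ∑ i : Fin n, ∑ j : Fin n, |b i * p i - b j * p j| ≤
    b jstar * p jstar :=
  welfare_lower_bounded_by_risk_general (fun i => b i * p i) (fun i => b i * q i) jstar
    fun i hi => (hjstar i).lt_of_ne (hdistinct i jstar hi)
end

section
/- Let n ≥ 1, B > 0, and b, p, q : Fin n → ℝ with 0 < b i ≤ B, p i ∈ [0,1], q i ∈ [0,1] for all i. With ℓ(q) = ∑_{i ≠ j} (b i * p i − b j * p j) * χ(b i * q i ≤ b j * q j) and ℓ^log_σ(q) = ∑_{i ≠ j} (b i * p i − b j * p j) * log(1 + exp(−σ * (b i * q i − b j * q j))), the choice σ = 2/B gives |ℓ^log_{2/B}(q) − ℓ(q)| ≤ (1/2) * ∑_{i ∈ Fin n} ∑_{j ∈ Fin n} |b i * p i − b j * p j|. -/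
/-!
The weights `w i j = b i * p i - b j * p j` are antisymmetric, so pairing the `(i, j)` and `(j, i)`
terms shows that only the difference between the errors at opposite margins `u` and `-u` matters.
Since `log (1 + exp t) - log (1 + exp (-t)) = t`, this difference is `sign u - σ * u`. It lies in
`[-1, 1]` as soon as `0 ≤ σ` and `|σ * u| ≤ 2`; the predicted eCPMs lie in `[0, B]`, so `σ = 2 / B`
qualifies. The factor `1 / 2` appears because each pair occurs twice in the double sum.
-/

lemma log_one_add_exp_sub_log_one_add_exp_neg (t : ℝ) :
    Real.log (1 + Real.exp t) - Real.log (1 + Real.exp (-t)) = t := by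
  have hfactor : 1 + Real.exp t = Real.exp t * (1 + Real.exp (-t)) := by
    rw [mul_add, mul_one, ← Real.exp_add, add_neg_cancel, Real.exp_zero, add_comm]
  rw [hfactor, Real.log_mul (by positivity) (by positivity), Real.log_exp, add_sub_cancel_right]

lemma indicator_nonpos_neg_sub_indicator_nonpos {R : Type*} [Ring R] [LinearOrder R]
    [IsStrictOrderedRing R] (u : R) :
    (if -u ≤ 0 then (1 : R) else 0) - (if u ≤ 0 then 1 else 0) = SignType.sign u := by
  rcases lt_trichotomy u 0 with hu | rfl | hu
  · simp [hu, hu.le, hu.not_ge]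
  · simp
  · simp [hu, hu.le, hu.not_ge]

/-- The error made at margin `u` when the logistic function of scale `σ` replaces the indicator
of `u ≤ 0`. -/
noncomputable def logisticError (σ u : ℝ) : ℝ :=
  Real.log (1 + Real.exp (-σ * u)) - if u ≤ 0 then 1 else 0

lemma logisticError_sub_logisticError_neg (σ u : ℝ) :
    logisticError σ u - logisticError σ (-u) = SignType.sign u - σ * u := by
  have hlog := log_one_add_exp_sub_log_one_add_exp_neg (σ * u)
  have hsign := indicator_nonpos_neg_sub_indicator_nonpos u
  simp only [logisticError, neg_mul, mul_neg, neg_neg]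
  linarith

lemma abs_sign_sub_mul_le_one {R : Type*} [CommRing R] [LinearOrder R] [IsStrictOrderedRing R]
    {σ u : R} (hσ : 0 ≤ σ) (hu : |σ * u| ≤ 2) : |SignType.sign u - σ * u| ≤ 1 := by
  obtain ⟨hlower, hupper⟩ := abs_le.mp hu
  rw [abs_le]
  rcases lt_trichotomy u 0 with hneg | rfl | hpos
  · have := mul_nonpos_of_nonneg_of_nonpos hσ hneg.le
    rw [sign_neg hneg, SignType.coe_neg_one]
    constructor <;> linarith
  · simp
  · have := mul_nonneg hσ hpos.le
    rw [sign_pos hpos, SignType.coe_one]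
    constructor <;> linarith

lemma abs_logisticError_sub_logisticError_neg_le_one {σ u : ℝ} (hσ : 0 ≤ σ) (hu : |σ * u| ≤ 2) :
    |logisticError σ u - logisticError σ (-u)| ≤ 1 := by
  rw [logisticError_sub_logisticError_neg]
  exact abs_sign_sub_mul_le_one hσ hu

section Antisymmetric

open Finset

variable {ι : Type*} [Fintype ι]

lemma sum_sum_mul_eq_half_sum_sum_mul_sub_swap {K : Type*} [Field K] [CharZero K]
    {w : ι → ι → K} (hw : ∀ i j, w j i = -w i j) (e : ι → ι → K) :
    ∑ i, ∑ j, w i j * e i j = (1 / 2) * ∑ i, ∑ j, w i j * (e i j - e j i) := by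
  have hswap : ∑ i, ∑ j, w i j * e j i = -∑ i, ∑ j, w i j * e i j := by
    rw [sum_comm]
    simp only [← sum_neg_distrib, ← neg_mul, ← hw]
  simp only [mul_sub, sum_sub_distrib, hswap]
  ring

lemma abs_sum_sum_mul_le_half_sum_sum_abs {K : Type*} [Field K] [LinearOrder K]
    [IsStrictOrderedRing K] {w e : ι → ι → K} (hw : ∀ i j, w j i = -w i j)
    (he : ∀ i j, |e i j - e j i| ≤ 1) :
    |∑ i, ∑ j, w i j * e i j| ≤ (1 / 2) * ∑ i, ∑ j, |w i j| := by
  have hterm i j : |w i j * (e i j - e j i)| ≤ |w i j| := by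
    rw [abs_mul]
    exact mul_le_of_le_one_right (abs_nonneg _) (he i j)
  rw [sum_sum_mul_eq_half_sum_sum_mul_sub_swap hw, abs_mul, abs_of_pos one_half_pos]
  refine mul_le_mul_of_nonneg_left ?_ one_half_pos.le
  calc |∑ i, ∑ j, w i j * (e i j - e j i)|
      ≤ ∑ i, ∑ j, |w i j * (e i j - e j i)| :=
        (abs_sum_le_sum_abs _ _).trans (sum_le_sum fun _ _ => abs_sum_le_sum_abs _ _)
    _ ≤ ∑ i, ∑ j, |w i j| := sum_le_sum fun i _ => sum_le_sum fun j _ => hterm i j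

variable [DecidableEq ι]

/-- The ranking loss `ℓ` of the scores `s` (the predicted eCPMs), where `w i j` weighs the event
`s i ≤ s j`; in the paper `w i j` is the difference of the ground-truth eCPMs of `i` and `j`. -/
noncomputable def rankingLoss (w : ι → ι → ℝ) (s : ι → ℝ) : ℝ :=
  ∑ i, ∑ j, if i ≠ j then w i j * (if s i ≤ s j then 1 else 0) else 0

/-- The logistic surrogate `ℓ^log_σ` of `rankingLoss`, for the same scores and weights. -/
noncomputable def logisticRankingLoss (σ : ℝ) (w : ι → ι → ℝ) (s : ι → ℝ) : ℝ :=
  ∑ i, ∑ j, if i ≠ j then w i j * Real.log (1 + Real.exp (-σ * (s i - s j))) else 0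

lemma logisticRankingLoss_sub_rankingLoss {w : ι → ι → ℝ} (hw : ∀ i, w i i = 0) (σ : ℝ)
    (s : ι → ℝ) :
    logisticRankingLoss σ w s - rankingLoss w s =
      ∑ i, ∑ j, w i j * logisticError σ (s i - s j) := by
  simp only [logisticRankingLoss, rankingLoss, ← sum_sub_distrib]
  refine sum_congr rfl fun i _ => sum_congr rfl fun j _ => ?_
  rcases eq_or_ne i j with rfl | hij
  · simp [hw]
  · simp only [if_pos hij, logisticError, sub_nonpos, mul_sub]

theorem logistic_surrogate_approximation_optimal_scale_general {σ : ℝ} {w : ι → ι → ℝ} {s : ι → ℝ}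
    (hσ : 0 ≤ σ) (hw : ∀ i j, w j i = -w i j) (hs : ∀ i j, |σ * (s i - s j)| ≤ 2) :
    |logisticRankingLoss σ w s - rankingLoss w s| ≤ (1 / 2) * ∑ i, ∑ j, |w i j| := by
  rw [logisticRankingLoss_sub_rankingLoss fun i => self_eq_neg.mp (hw i i)]
  refine abs_sum_sum_mul_le_half_sum_sum_abs hw fun i j => ?_
  rw [← neg_sub (s i) (s j)]
  exact abs_logisticError_sub_logisticError_neg_le_one hσ (hs i j)

end Antisymmetric

lemma abs_two_div_mul_sub_le_two {K : Type*} [Field K] [LinearOrder K] [IsStrictOrderedRing K]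
    {B x y : K} (hB : 0 < B) (hx : x ∈ Set.Icc 0 B) (hy : y ∈ Set.Icc 0 B) :
    |2 / B * (x - y)| ≤ 2 := by
  have hxy : |x - y| ≤ B := by simpa using abs_sub_le_of_le_of_le hx.1 hx.2 hy.1 hy.2
  calc |2 / B * (x - y)| = 2 / B * |x - y| := by rw [abs_mul, abs_of_pos (by positivity)]
    _ ≤ 2 / B * B := by gcongr
    _ = 2 := div_mul_cancel₀ 2 hB.ne'

lemma mul_mem_Icc_of_le_of_mem_Icc {R : Type*} [Semiring R] [PartialOrder R] [IsOrderedRing R]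
    {B b q : R} (hb : 0 ≤ b) (hbB : b ≤ B) (hq : q ∈ Set.Icc 0 1) : b * q ∈ Set.Icc 0 B :=
  ⟨mul_nonneg hb hq.1, (mul_le_of_le_one_right hb hq.2).trans hbB⟩

/-- With the scale `σ = 2/B`, the logistic surrogate approximates the ranking
loss with constant 1. -/
theorem logistic_surrogate_approximation_optimal_scale
    (n : ℕ) (hn : 1 ≤ n) (B : ℝ) (hB : 0 < B)
    (b p q : Fin n → ℝ)
    (hb : ∀ i, 0 < b i ∧ b i ≤ B)
    (hp : ∀ i, p i ∈ Set.Icc (0 : ℝ) 1)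
    (hq : ∀ i, q i ∈ Set.Icc (0 : ℝ) 1) :
    |(∑ i : Fin n, ∑ j : Fin n,
        (if i ≠ j then
          (b i * p i - b j * p j) *
            Real.log (1 + Real.exp (-(2 / B) * (b i * q i - b j * q j)))
        else 0)) -
      (∑ i : Fin n, ∑ j : Fin n,
        (if i ≠ j then
          (b i * p i - b j * p j) * (if b i * q i ≤ b j * q j then (1 : ℝ) else 0)
        else 0))| ≤
    (1 / 2) * ∑ i : Fin n, ∑ j : Fin n, |b i * p i - b j * p j| := by
  have hbq i : b i * q i ∈ Set.Icc 0 B := mul_mem_Icc_of_le_of_mem_Icc (hb i).1.le (hb i).2 (hq i)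
  exact logistic_surrogate_approximation_optimal_scale_general
    (w := fun i j => b i * p i - b j * p j) (s := fun i => b i * q i) (by positivity)
    (fun _ _ => (neg_sub _ _).symm) fun i j => abs_two_div_mul_sub_le_two hB (hbq i) (hbq j)
end

section
/- Let n ≥ 1, B > 0, and b, p, p̂, q : Fin n → ℝ with 0 < b i ≤ B for all i. Define R(q) = ∑_{i ≠ j} (b i * p i − b j * p j) * χ(b i * q i ≤ b j * q j) and the plug-in loss ℓ̂(q) = ∑_{i ≠ j} (b i * p̂ i − b j * p̂ j) * χ(b i * q i ≤ b j * q j), both sums over ordered pairs of distinct indices. Then |ℓ̂(q) − R(q)| ≤ (n − 1) * B * ∑_{i ∈ Fin n} |p̂ i − p i|. -/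
/-!
Both losses are the same linear functional of the ad values `b i * c i`, so their difference is that
functional at `v i = b i * (phat i - p i)`. Exchanging the two indices in the `v j` part of
`∑ i, ∑ j, (v i - v j) * χ i j` turns it into `∑ i, v i * ∑ j, (χ i j - χ j i)`, where each of the
`n - 1` off-diagonal differences `χ i j - χ j i` lies in `[-1, 1]`. Grouping by `i` before taking
absolute values is what avoids a factor `2`.
-/

open Finset

theorem sum_sum_sub_mul_eq_sum_mul_sum_sub {ι R : Type*} [NonUnitalNonAssocRing R]
    (s : Finset ι) (v : ι → R) (w : ι → ι → R) :
    ∑ i ∈ s, ∑ j ∈ s, (v i - v j) * w i j = ∑ i ∈ s, v i * ∑ j ∈ s, (w i j - w j i) := by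
  simp only [sub_mul, mul_sum, mul_sub, sum_sub_distrib]
  rw [sum_comm (f := fun i j => v j * w i j)]

section OrderedRing

variable {ι R : Type*} [CommRing R] [LinearOrder R] [IsStrictOrderedRing R]

theorem abs_sum_sub_swap_le {s : Finset ι} {w : ι → ι → R} {i : ι} (hi : i ∈ s)
    (hw : ∀ j ∈ s, |w i j - w j i| ≤ 1) : |∑ j ∈ s, (w i j - w j i)| ≤ (#s - 1 : ℕ) := by
  classical
  calc |∑ j ∈ s, (w i j - w j i)|
      = |∑ j ∈ s.erase i, (w i j - w j i)| := by rw [sum_erase s (sub_self (w i i))]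
    _ ≤ ∑ j ∈ s.erase i, |w i j - w j i| := abs_sum_le_sum_abs _ _
    _ ≤ #(s.erase i) • (1 : R) := sum_le_card_nsmul _ _ _ fun j hj => hw j (mem_of_mem_erase hj)
    _ = (#s - 1 : ℕ) := by rw [card_erase_of_mem hi, nsmul_one]

theorem abs_sum_sum_sub_mul_le (s : Finset ι) (v : ι → R) {w : ι → ι → R}
    (hw : ∀ i ∈ s, ∀ j ∈ s, |w i j - w j i| ≤ 1) :
    |∑ i ∈ s, ∑ j ∈ s, (v i - v j) * w i j| ≤ (#s - 1 : ℕ) * ∑ i ∈ s, |v i| := by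
  rw [sum_sum_sub_mul_eq_sum_mul_sum_sub, mul_sum]
  refine (abs_sum_le_sum_abs _ _).trans (sum_le_sum fun i hi => ?_)
  rw [abs_mul, mul_comm]
  exact mul_le_mul_of_nonneg_right (abs_sum_sub_swap_le hi (hw i hi)) (abs_nonneg _)

end OrderedRing

section PairwiseLoss

variable {ι R : Type*} [Fintype ι] [DecidableEq ι] [CommRing R] [LinearOrder R]

/-- The pairwise ranking loss of scores `s` for items of values `v`: every ordered pair of distinct
items with `s i ≤ s j` contributes `v i - v j`. The conditional risk `R(q)` is the case
`v i = b i * p i`, `s i = b i * q i`, and the plug-in loss has `phat` in place of `p`. -/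
def pairwiseLoss (v s : ι → R) : R :=
  ∑ i, ∑ j, if i ≠ j then (v i - v j) * (if s i ≤ s j then 1 else 0) else 0

theorem pairwiseLoss_eq_sum_sum (v s : ι → R) :
    pairwiseLoss v s = ∑ i, ∑ j, (v i - v j) * (if s i ≤ s j then 1 else 0) := by
  refine sum_congr rfl fun i _ => sum_congr rfl fun j _ => ite_eq_left_iff.2 fun h => ?_
  rw [not_not.1 h, sub_self, zero_mul]

theorem pairwiseLoss_sub (v v' s : ι → R) :
    pairwiseLoss (v - v') s = pairwiseLoss v s - pairwiseLoss v' s := by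
  simp only [pairwiseLoss_eq_sum_sum, ← sum_sub_distrib, ← sub_mul, Pi.sub_apply,
    sub_sub_sub_comm]

variable [IsStrictOrderedRing R]

theorem abs_pairwiseLoss_le (v s : ι → R) :
    |pairwiseLoss v s| ≤ (Fintype.card ι - 1 : ℕ) * ∑ i, |v i| := by
  rw [pairwiseLoss_eq_sum_sum]
  refine abs_sum_sum_sub_mul_le univ v fun i _ j _ => ?_
  split_ifs <;> simp

theorem plug_in_loss_approximates_risk_general {B : R} {b : ι → R} (hb : ∀ i, |b i| ≤ B)
    (p phat q : ι → R) :
    |pairwiseLoss (b * phat) (b * q) - pairwiseLoss (b * p) (b * q)| ≤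
      (Fintype.card ι - 1 : ℕ) * B * ∑ i, |phat i - p i| := by
  rw [← pairwiseLoss_sub, ← mul_sub, mul_assoc, mul_sum]
  refine (abs_pairwiseLoss_le _ _).trans ?_
  gcongr with i
  rw [Pi.mul_apply, Pi.sub_apply, abs_mul]
  exact mul_le_mul_of_nonneg_right (hb i) (abs_nonneg _)

end PairwiseLoss

/-- The plug-in loss approximates the conditional risk up to the aggregate
estimation error of the plug-in CTR estimates. -/
theorem plug_in_loss_approximates_risk
    (n : ℕ) (hn : 1 ≤ n) (B : ℝ) (hB : 0 < B)
    (b p phat q : Fin n → ℝ)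
    (hb : ∀ i, 0 < b i ∧ b i ≤ B) :
    |(∑ i : Fin n, ∑ j : Fin n,
        (if i ≠ j then
          (b i * phat i - b j * phat j) *
            (if b i * q i ≤ b j * q j then (1 : ℝ) else 0)
        else 0)) -
      (∑ i : Fin n, ∑ j : Fin n,
        (if i ≠ j then
          (b i * p i - b j * p j) *
            (if b i * q i ≤ b j * q j then (1 : ℝ) else 0)
        else 0))| ≤
    ((n : ℝ) - 1) * B * ∑ i : Fin n, |phat i - p i| := by
  have h := plug_in_loss_approximates_risk_general
    (fun i => (abs_of_pos (hb i).1).trans_le (hb i).2) p phat q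
  rwa [Fintype.card_fin, Nat.cast_pred hn] at h
end
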